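/- arXiv:alg-geom/9510009 — 2 statements merged into one kernel-verified Lean document; each statement's English description precedes it below -/
import Mathlib

section
/- Let n ≥ 1 and let Z ⊆ ℂⁿ be the set of common zeros of a family of polynomials in n variables all of whose coefficients are algebraic numbers. Then the set of points of Z all of whose coordinates are algebraic numbers is dense in Z with respect to the Euclidean topology. In particular, every point of Z that is not defined over the algebraic numbers is not isolated in Z, and admits points of Z with algebraic coordinates arbitrarily close to it. -/
/-!
Let `K` be the field of algebraic numbers and `p ∈ ℂⁿ`. Every polynomial relation over `K` between
the coordinates of `p` is to persist at points `x ∈ Kⁿ` tending to `p`; such `x` then lie on `Z`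
as soon as `p` does. One builds `x` one coordinate at a time. If the next coordinate `α` of `p`
is transcendental over the previous ones, any element of `K` near `α` will do. Otherwise take a
relation `F` of least degree satisfied by `α` over the previous coordinates and specialize its
coefficients: by continuity of roots the specialized polynomial has a root near `α`, and that root
lies in `K`. Pseudo-division by `F` shows that all other relations persist as well.
-/

open Filter Topology Polynomial

section PseudoDivision

theorem exists_leadingCoeff_pow_mul_eq_mul_add {R : Type*} [CommRing R] {F : R[X]}
    (hF : 0 < F.natDegree) (Q : R[X]) :
    ∃ (m : ℕ) (G r : R[X]),
      C F.leadingCoeff ^ m * Q = F * G + r ∧ r.natDegree < F.natDegree := by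
  induction hn : Q.natDegree using Nat.strong_induction_on generalizing Q with
  | _ n ih =>
    subst hn
    rcases lt_or_ge Q.natDegree F.natDegree with hlt | hle
    · exact ⟨0, 0, Q, by simp, hlt⟩
    · have hcancel := natDegree_cancelLeads_lt_of_natDegree_le_natDegree hle (hF.trans_le hle)
      obtain ⟨m, G, r, hdiv, hr⟩ := ih _ hcancel _ rfl
      refine ⟨m + 1, G + C F.leadingCoeff ^ m * C Q.leadingCoeff *
        X ^ (Q.natDegree - F.natDegree), r, ?_, hr⟩
      rw [cancelLeads, Nat.sub_eq_zero_of_le hle, pow_zero, mul_one] at hdiv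
      linear_combination hdiv

end PseudoDivision

section MinimalRelation

variable {A D E : Type*} [CommRing A] [CommRing D] [CommRing E]

theorem polynomial_map_eq_zero_of_ker_le {φ : A →+* D} {ψ : A →+* E}
    (hker : RingHom.ker φ ≤ RingHom.ker ψ) {Q : A[X]} (hQ : Q.map φ = 0) : Q.map ψ = 0 := by
  ext i
  have hi : φ (Q.coeff i) = 0 := by rw [← coeff_map, hQ, coeff_zero]
  simpa using hker hi

/-- A polynomial of least degree among those over `A` that vanish at `α` and have nonzero image
under `φ`: it plays the role of the minimal polynomial of `α` over `Frac (φ A)` with cleared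
denominators. The degree is that of `F` itself rather than of its image. -/
def IsMinimalRelation (φ : A →+* D) (α : D) (F : A[X]) : Prop :=
  MinimalFor (fun Q : A[X] => Q.map φ ≠ 0 ∧ Q.eval₂ φ α = 0) natDegree F

namespace IsMinimalRelation

variable {φ : A →+* D} {α : D} {F : A[X]}

theorem map_eq_zero_of_natDegree_lt (hF : IsMinimalRelation φ α F) {Q : A[X]}
    (hQ : Q.eval₂ φ α = 0) (hdeg : Q.natDegree < F.natDegree) : Q.map φ = 0 := by
  by_contra hne
  exact hF.not_prop_of_lt hdeg ⟨hne, hQ⟩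

theorem natDegree_pos (hF : IsMinimalRelation φ α F) : 0 < F.natDegree := by
  obtain ⟨hne, hroot⟩ := hF.prop
  rw [Nat.pos_iff_ne_zero]
  intro hdeg
  rw [eq_C_of_natDegree_eq_zero hdeg] at hne hroot
  rw [eval₂_C] at hroot
  simp [hroot] at hne

theorem map_leadingCoeff_ne_zero (hF : IsMinimalRelation φ α F) : φ F.leadingCoeff ≠ 0 := by
  intro hlc
  obtain ⟨hne, hroot⟩ := hF.prop
  have hmap : F.eraseLead.map φ = F.map φ := by
    rw [← F.self_sub_C_mul_X_pow, Polynomial.map_sub, Polynomial.map_mul, map_C, hlc]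
    simp
  rcases F.eraseLead_natDegree_lt_or_eraseLead_eq_zero with hdeg | hzero
  · refine hne (hmap ▸ hF.map_eq_zero_of_natDegree_lt ?_ hdeg)
    rw [← eval_map, hmap, eval_map, hroot]
  · exact hne (by rw [← hmap, hzero, Polynomial.map_zero])

theorem ker_eval₂RingHom_le [IsDomain E] (hF : IsMinimalRelation φ α F) {ψ : A →+* E}
    (hker : RingHom.ker φ ≤ RingHom.ker ψ) (hlc : ψ F.leadingCoeff ≠ 0) {y : E}
    (hy : F.eval₂ ψ y = 0) :
    RingHom.ker (eval₂RingHom φ α) ≤ RingHom.ker (eval₂RingHom ψ y) := by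
  intro Q hQ
  rw [RingHom.mem_ker, coe_eval₂RingHom] at hQ ⊢
  obtain ⟨m, G, r, hdiv, hr⟩ := exists_leadingCoeff_pow_mul_eq_mul_add hF.natDegree_pos Q
  have hrα : r.eval₂ φ α = 0 := by
    simpa [eval₂_mul, eval₂_add, hQ, hF.prop.2] using (congrArg (eval₂ φ α) hdiv).symm
  have hry : r.eval₂ ψ y = 0 := by
    rw [← eval_map, polynomial_map_eq_zero_of_ker_le hker
      (hF.map_eq_zero_of_natDegree_lt hrα hr), eval_zero]
  have hmul : ψ F.leadingCoeff ^ m * Q.eval₂ ψ y = 0 := by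
    simpa [eval₂_mul, eval₂_add, eval₂_pow, hy, hry] using congrArg (eval₂ ψ y) hdiv
  exact (mul_eq_zero.mp hmul).resolve_left (pow_ne_zero m hlc)

end IsMinimalRelation

theorem ker_eval₂RingHom_le_of_forall_not_isMinimalRelation {φ : A →+* D} {α : D}
    (hα : ∀ F, ¬ IsMinimalRelation φ α F) {ψ : A →+* E} (hker : RingHom.ker φ ≤ RingHom.ker ψ)
    (y : E) : RingHom.ker (eval₂RingHom φ α) ≤ RingHom.ker (eval₂RingHom ψ y) := by
  intro Q hQ
  have hmap : Q.map φ = 0 := by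
    by_contra hne
    obtain ⟨F, hF⟩ := exists_minimalFor_of_wellFoundedLT
      (fun Q : A[X] => Q.map φ ≠ 0 ∧ Q.eval₂ φ α = 0) natDegree ⟨Q, hne, hQ⟩
    exact hα F hF
  rw [RingHom.mem_ker, coe_eval₂RingHom, ← eval_map, polynomial_map_eq_zero_of_ker_le hker hmap,
    eval_zero]

end MinimalRelation

section ContinuityOfRoots

theorem tendsto_eval₂ {ι A R : Type*} [Semiring A] [Semiring R] [TopologicalSpace R]
    [IsTopologicalSemiring R] {l : Filter ι} {φ : A →+* R} {ψ : ι → A →+* R}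
    (hψ : ∀ a, Tendsto (fun k => ψ k a) l (𝓝 (φ a))) {α : R} {y : ι → R}
    (hy : Tendsto y l (𝓝 α)) (Q : A[X]) :
    Tendsto (fun k => Q.eval₂ (ψ k) (y k)) l (𝓝 (Q.eval₂ φ α)) := by
  simp only [eval₂_eq_sum, Polynomial.sum]
  exact tendsto_finsetSum _ fun i _ => (hψ _).mul (hy.pow i)

theorem norm_leadingCoeff_mul_pow_le_norm_eval {L : Type*} [NormedField L] {g : L[X]}
    (hg : g.Splits) {α : L} {δ : ℝ} (hδ : 0 ≤ δ) (hroots : ∀ b ∈ g.roots, δ ≤ ‖α - b‖) :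
    ‖g.leadingCoeff‖ * δ ^ g.natDegree ≤ ‖g.eval α‖ := by
  have hprod : ‖(g.roots.map (α - ·)).prod‖ = (g.roots.map fun b => ‖α - b‖).prod := by
    simpa using (g.roots.prod_hom' (normHom : L →*₀ ℝ) (α - ·)).symm
  rw [hg.eval_eq_prod_roots, norm_mul, hprod]
  gcongr
  simpa [hg.natDegree_eq_card_roots] using
    Multiset.prod_map_le_prod_map₀ (fun _ => δ) (fun b => ‖α - b‖) (fun _ _ => hδ) hroots

theorem eventually_exists_eval₂_eq_zero_and_norm_sub_lt {ι A K L : Type*} [Semiring A] [Field K]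
    [IsAlgClosed K] [NormedField L] [Algebra K L] {l : Filter ι} {φ : A →+* L} {ψ : ι → A →+* K}
    (hψ : ∀ a, Tendsto (fun k => algebraMap K L (ψ k a)) l (𝓝 (φ a))) {F : A[X]} {α : L}
    (hlc : φ F.leadingCoeff ≠ 0) (hF : F.eval₂ φ α = 0) {δ : ℝ} (hδ : 0 < δ) :
    ∀ᶠ k in l, ∃ y : K, F.eval₂ (ψ k) y = 0 ∧ ‖α - algebraMap K L y‖ < δ := by
  have heval : Tendsto (fun k => ‖F.eval₂ ((algebraMap K L).comp (ψ k)) α‖) l (𝓝 0) := by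
    simpa [hF] using (tendsto_eval₂ (ψ := fun k => (algebraMap K L).comp (ψ k)) hψ
      (tendsto_const_nhds (x := α)) F).norm
  have hlower : Tendsto (fun k => ‖algebraMap K L (ψ k F.leadingCoeff)‖ * δ ^ F.natDegree) l
      (𝓝 (‖φ F.leadingCoeff‖ * δ ^ F.natDegree)) := (hψ _).norm.mul_const _
  filter_upwards [heval.eventually_lt hlower (by positivity), (hψ _).eventually_ne hlc]
    with k hlt hne
  by_contra! hfar
  have hψlc : ψ k F.leadingCoeff ≠ 0 := fun h => hne (by rw [h, map_zero])
  set g : K[X] := F.map (ψ k)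
  have hg : g.Splits := IsAlgClosed.splits g
  have hbound := norm_leadingCoeff_mul_pow_le_norm_eval (hg.map (algebraMap K L)) (α := α) hδ.le
    (by
      intro b hb
      rw [hg.roots_map, Multiset.mem_map] at hb
      obtain ⟨y, hy, rfl⟩ := hb
      exact hfar y (by simpa [g, eval_map] using (mem_roots'.mp hy).2))
  rw [natDegree_map, leadingCoeff_map, natDegree_map_of_leadingCoeff_ne_zero _ hψlc,
    leadingCoeff_map_of_leadingCoeff_ne_zero _ hψlc, Polynomial.map_map, eval_map] at hbound
  exact hbound.not_gt hlt

end ContinuityOfRoots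

section SpecializationFilter

variable {K L A B : Type*} [Field K] [NormedField L] [Algebra K L]
  [CommRing A] [Algebra K A] [CommRing B] [Algebra K B]

/-- The `K`-rational specializations, in Weil's sense, of an `L`-point `φ` of `A` that are close
to `φ`: those `K`-points of `A` at which every relation satisfied by `φ` holds, with closeness
measured pointwise on `A`. That this filter is nontrivial means that `φ` is a limit of its
`K`-rational specializations. -/
def specializationFilter (φ : A →ₐ[K] L) : Filter (A →ₐ[K] K) :=
  comap (fun ψ a => algebraMap K L (ψ a)) (𝓝 φ) ⊓ 𝓟 {ψ | RingHom.ker φ ≤ RingHom.ker ψ}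

theorem tendsto_specializationFilter_iff {ι : Type*} {l : Filter ι} {φ : A →ₐ[K] L}
    {ψ : ι → A →ₐ[K] K} :
    Tendsto ψ l (specializationFilter φ) ↔
      (∀ a, Tendsto (fun k => algebraMap K L (ψ k a)) l (𝓝 (φ a))) ∧
        ∀ᶠ k in l, RingHom.ker φ ≤ RingHom.ker (ψ k) := by
  simp [specializationFilter, tendsto_inf, tendsto_comap_iff, tendsto_pi_nhds, Function.comp_def]

theorem tendsto_algebraMap_specializationFilter (φ : A →ₐ[K] L) (a : A) :
    Tendsto (fun ψ => algebraMap K L (ψ a)) (specializationFilter φ) (𝓝 (φ a)) :=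
  (tendsto_specializationFilter_iff.mp tendsto_id).1 a

theorem eventually_ker_le_specializationFilter (φ : A →ₐ[K] L) :
    ∀ᶠ ψ in specializationFilter φ, RingHom.ker φ ≤ RingHom.ker ψ :=
  (tendsto_specializationFilter_iff.mp tendsto_id).2

theorem neBot_specializationFilter_ofId : (specializationFilter (Algebra.ofId K L)).NeBot := by
  have htendsto : Tendsto (fun _ : Unit => AlgHom.id K K) ⊤
      (specializationFilter (Algebra.ofId K L)) := by
    refine tendsto_specializationFilter_iff.mpr ⟨fun a => tendsto_const_nhds, .of_forall ?_⟩
    intro _ a ha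
    simpa [RingHom.mem_ker, Algebra.ofId_apply] using ha
  exact htendsto.neBot

theorem neBot_specializationFilter_comp {φ : B →ₐ[K] L} (hφ : (specializationFilter φ).NeBot)
    (f : A →ₐ[K] B) : (specializationFilter (φ.comp f)).NeBot := by
  have htendsto : Tendsto (fun ψ : B →ₐ[K] K => ψ.comp f) (specializationFilter φ)
      (specializationFilter (φ.comp f)) := by
    refine tendsto_specializationFilter_iff.mpr
      ⟨fun a => tendsto_algebraMap_specializationFilter φ (f a), ?_⟩
    filter_upwards [eventually_ker_le_specializationFilter φ] with ψ hψ a ha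
    exact hψ ha
  exact htendsto.neBot

theorem neBot_specializationFilter_of_algEquiv (e : A ≃ₐ[K] B)
    (hB : ∀ φ : B →ₐ[K] L, (specializationFilter φ).NeBot) (φ : A →ₐ[K] L) :
    (specializationFilter φ).NeBot := by
  have hφ : (φ.comp e.symm.toAlgHom).comp e.toAlgHom = φ := by ext a; simp
  exact hφ ▸ neBot_specializationFilter_comp (hB _) e.toAlgHom

theorem neBot_specializationFilter_aevalTower {φ : A →ₐ[K] L}
    (hφ : (specializationFilter φ).NeBot) {α : L}
    (hα : ∀ δ > 0, ∀ᶠ ψ in specializationFilter φ, ∃ y : K, ‖α - algebraMap K L y‖ < δ ∧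
      RingHom.ker (aevalTower φ α) ≤ RingHom.ker (aevalTower ψ y)) :
    (specializationFilter (aevalTower φ α)).NeBot := by
  set l : Filter ((A →ₐ[K] K) × K) :=
    (specializationFilter φ ×ˢ comap (algebraMap K L) (𝓝 α)) ⊓
      𝓟 {x | RingHom.ker (aevalTower φ α) ≤ RingHom.ker (aevalTower x.1 x.2)}
  have hl : l.NeBot := by
    have hbasis := (specializationFilter φ).basis_sets.prod
      ((Metric.nhds_basis_ball (x := α)).comap (algebraMap K L))
    refine (hbasis.inf_principal_neBot_iff).mpr ?_
    rintro ⟨U, δ⟩ ⟨hU, hδ⟩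
    obtain ⟨ψ, ⟨y, hy, hker⟩, hψU⟩ := ((hα δ hδ).and hU).exists
    exact ⟨(ψ, y), ⟨hψU, by simpa [dist_comm, dist_eq_norm] using hy⟩, hker⟩
  have hfst : Tendsto Prod.fst l (specializationFilter φ) := tendsto_fst.mono_left inf_le_left
  have hsnd : Tendsto (fun x => algebraMap K L x.2) l (𝓝 α) :=
    (tendsto_comap.comp tendsto_snd).mono_left inf_le_left
  have htendsto : Tendsto (fun x => aevalTower x.1 x.2) l
      (specializationFilter (aevalTower φ α)) := by
    refine tendsto_specializationFilter_iff.mpr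
      ⟨fun Q => ?_, mem_inf_of_right (mem_principal_self _)⟩
    have hcoeff (a : A) : Tendsto (fun x => algebraMap K L (x.1 a)) l (𝓝 (φ a)) :=
      (tendsto_algebraMap_specializationFilter φ a).comp hfst
    simpa [aevalTower, hom_eval₂] using tendsto_eval₂ (φ := (φ : A →+* L))
      (ψ := fun x => (algebraMap K L).comp (x.1 : A →+* K)) hcoeff hsnd Q
  exact htendsto.neBot

variable [IsAlgClosed K]

theorem neBot_specializationFilter_polynomial (hd : DenseRange (algebraMap K L))
    (hA : ∀ φ : A →ₐ[K] L, (specializationFilter φ).NeBot) (φ : A[X] →ₐ[K] L) :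
    (specializationFilter φ).NeBot := by
  obtain ⟨φ, α, rfl⟩ : ∃ (φ₀ : A →ₐ[K] L) (α : L), φ = aevalTower φ₀ α :=
    ⟨φ.comp CAlgHom, φ X, by ext <;> simp⟩
  refine neBot_specializationFilter_aevalTower (hA φ) fun δ hδ => ?_
  have hker := eventually_ker_le_specializationFilter φ
  by_cases hα : ∃ F, IsMinimalRelation (φ : A →+* L) α F
  · obtain ⟨F, hF⟩ := hα
    have hlc := (tendsto_algebraMap_specializationFilter φ F.leadingCoeff).eventually_ne
      hF.map_leadingCoeff_ne_zero
    have hroot := eventually_exists_eval₂_eq_zero_and_norm_sub_lt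
      (ψ := fun ψ : A →ₐ[K] K => (ψ : A →+* K)) (tendsto_algebraMap_specializationFilter φ)
      hF.map_leadingCoeff_ne_zero hF.prop.2 hδ
    filter_upwards [hker, hlc, hroot] with ψ hψ hψlc ⟨y, hy, hyδ⟩
    exact ⟨y, hyδ, hF.ker_eval₂RingHom_le hψ (fun h => hψlc (by simpa using h)) hy⟩
  · obtain ⟨y, hy⟩ := hd.exists_dist_lt α hδ
    filter_upwards [hker] with ψ hψ
    exact ⟨y, dist_eq_norm α _ ▸ hy,
      ker_eval₂RingHom_le_of_forall_not_isMinimalRelation (not_exists.mp hα) hψ y⟩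

theorem neBot_specializationFilter_mvPolynomial {σ : Type*} [Finite σ]
    (hd : DenseRange (algebraMap K L)) (φ : MvPolynomial σ K →ₐ[K] L) :
    (specializationFilter φ).NeBot := by
  induction σ using Finite.induction_empty_option with
  | of_equiv e ih =>
    exact neBot_specializationFilter_of_algEquiv (MvPolynomial.renameEquiv K e).symm ih φ
  | h_empty =>
    refine neBot_specializationFilter_of_algEquiv (MvPolynomial.isEmptyAlgEquiv K PEmpty) ?_ φ
    intro φ₀
    exact Subsingleton.elim (Algebra.ofId K L) φ₀ ▸ neBot_specializationFilter_ofId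
  | h_option ih =>
    exact neBot_specializationFilter_of_algEquiv (MvPolynomial.optionEquivLeft K _)
      (neBot_specializationFilter_polynomial hd ih) φ

end SpecializationFilter

theorem denseRange_algebraMap_algebraicClosure_rat_complex :
    DenseRange (algebraMap (algebraicClosure ℚ ℂ) ℂ) := by
  set M : Subfield ℂ := (algebraicClosure ℚ ℂ).toSubfield
  have hI : Complex.I ∈ M.topologicalClosure :=
    M.le_topologicalClosure <| mem_algebraicClosure_iff.mpr <|
      IsAlgebraic.of_pow two_pos (by simpa using isAlgebraic_algebraMap (A := ℂ) (-1 : ℚ))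
  have htop : M.topologicalClosure = ⊤ := by
    refine (Complex.subfield_eq_of_closed M.isClosed_topologicalClosure).resolve_left ?_
    intro hreal
    obtain ⟨r, hr⟩ := hreal ▸ hI
    simpa using congrArg Complex.im hr
  intro z
  have hz : z ∈ M.topologicalClosure := htop ▸ Subfield.mem_top z
  exact closure_mono (fun x hx => Set.mem_range.mpr ⟨⟨x, hx⟩, rfl⟩) hz

theorem algebraic_points_dense_in_zero_locus_general {σ K L : Type*} [Finite σ] [Field K]
    [IsAlgClosed K] [NormedField L] [Algebra K L] (hd : DenseRange (algebraMap K L))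
    (S : Set (MvPolynomial σ L)) (hS : ∀ P ∈ S, ∀ m, P.coeff m ∈ Set.range (algebraMap K L)) :
    ∀ p ∈ {x : σ → L | ∀ P ∈ S, MvPolynomial.eval x P = 0},
      p ∈ closure {x : σ → L |
        (∀ P ∈ S, MvPolynomial.eval x P = 0) ∧ ∀ i, x i ∈ Set.range (algebraMap K L)} := by
  intro p hp
  have := neBot_specializationFilter_mvPolynomial hd (MvPolynomial.aeval (R := K) p)
  have hlim : Tendsto (fun (ψ : MvPolynomial σ K →ₐ[K] K) i => algebraMap K L (ψ (.X i)))
      (specializationFilter (MvPolynomial.aeval p)) (𝓝 p) :=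
    tendsto_pi_nhds.mpr fun i => by
      simpa using tendsto_algebraMap_specializationFilter (MvPolynomial.aeval (R := K) p) (.X i)
  refine mem_closure_of_tendsto hlim ?_
  filter_upwards [eventually_ker_le_specializationFilter (MvPolynomial.aeval p)] with ψ hψ
  refine ⟨fun P hP => ?_, fun i => Set.mem_range_self _⟩
  obtain ⟨Q, rfl⟩ : P ∈ Set.range (MvPolynomial.map (algebraMap K L)) := by
    rw [MvPolynomial.mem_range_map_iff_coeffs_subset]
    intro c hc
    obtain ⟨m, -, rfl⟩ := MvPolynomial.mem_coeffs_iff.mp hc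
    exact hS P hP m
  have hψQ : ψ Q = 0 := hψ (by simpa [MvPolynomial.aeval_def, MvPolynomial.eval_map] using hp _ hP)
  have hev : MvPolynomial.aeval (fun i => ψ (.X i)) Q = ψ Q :=
    (DFunLike.congr_fun (MvPolynomial.aeval_unique ψ) Q).symm
  rw [MvPolynomial.eval_map, ← MvPolynomial.aeval_def,
    ← Function.comp_def (algebraMap K L), MvPolynomial.aeval_algebraMap_apply, hev, hψQ, map_zero]

/-- If `Z ⊆ ℂⁿ` is the set of common zeros of a family of polynomials with algebraic
coefficients, then the points of `Z` all of whose coordinates are algebraic numbers are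
dense in `Z` for the Euclidean topology. -/
theorem algebraic_points_dense_in_zero_locus
    (n : ℕ) (hn : 1 ≤ n) (S : Set (MvPolynomial (Fin n) ℂ))
    (hS : ∀ P ∈ S, ∀ m, IsAlgebraic ℚ (MvPolynomial.coeff m P)) :
    ∀ p ∈ {x : Fin n → ℂ | ∀ P ∈ S, MvPolynomial.eval x P = 0},
      p ∈ closure {x : Fin n → ℂ |
        (∀ P ∈ S, MvPolynomial.eval x P = 0) ∧ ∀ i, IsAlgebraic ℚ (x i)} := by
  have : IsAlgClosed (algebraicClosure ℚ ℂ) := (algebraicClosure.isAlgClosure ℚ ℂ).isAlgClosed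
  simpa [mem_algebraicClosure_iff] using algebraic_points_dense_in_zero_locus_general
    denseRange_algebraMap_algebraicClosure_rat_complex S
    (by simpa [mem_algebraicClosure_iff] using hS)
end

section
/- Let n ≥ 1, let Z ⊆ (ℂˣ)ⁿ be the set of common zeros, lying in (ℂˣ)ⁿ, of a family of polynomials in n variables all of whose coefficients are algebraic numbers, and let χ : (ℂˣ)ⁿ → ℂˣ be the character given by χ(x₁,…,xₙ) = x₁^{a₁}⋯xₙ^{aₙ} for some integers a₁,…,aₙ. If there exists a point p ∈ Z such that χ(p) is not an algebraic number, then the image χ(Z) is an open subset of ℂˣ in the Euclidean topology. -/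
/-!
Let `p ∈ Z` be a point at which `χ(p)` is transcendental over the field `K` of algebraic numbers,
and let `B = K[pᵢ, pᵢ⁻¹]` be the coordinate ring of the Zariski closure of `p`.
Every `K`-algebra map `B → ℂ` yields a point of `Z`, because the equations of `Z` are defined
over `K`. Since `χ(p) ∈ B` is transcendental over `K`, it defines a dominant morphism from `Spec B`
to the affine line over `K`, whose image contains all but finitely many points by Chevalley's
theorem. Hence `χ(Z)` is even cofinite in `ℂˣ`.
-/

open scoped Polynomial TensorProduct

section Chevalley

theorem exists_zeroLocus_inter_basicOpen_subset_of_isConstructible {R : Type*} [CommRing R]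
    {s : Set (PrimeSpectrum R)} (hs : Topology.IsConstructible s) {q : PrimeSpectrum R}
    (hq : q ∈ s) :
    ∃ f ∉ q.asIdeal,
      PrimeSpectrum.zeroLocus (q.asIdeal : Set R) ∩ PrimeSpectrum.basicOpen f ⊆ s := by
  obtain ⟨D, rfl⟩ := PrimeSpectrum.exists_constructibleSetData_iff.mpr hs
  obtain ⟨C, hC, hqC⟩ := Set.mem_iUnion₂.mp hq
  refine ⟨C.f, fun hf => hqC.2 (Set.singleton_subset_iff.mpr hf), fun x hx => ?_⟩
  exact Set.mem_biUnion hC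
    ⟨fun _ hg => hx.1 (hqC.1 hg), fun hf => hx.2 (Set.singleton_subset_iff.mp hf)⟩

theorem nonempty_algHom_of_finiteType {k A Ω : Type*} [Field k] [CommRing A] [Nontrivial A]
    [Algebra k A] [Algebra.FiniteType k A] [Field Ω] [IsAlgClosed Ω] [Algebra k Ω] :
    Nonempty (A →ₐ[k] Ω) := by
  obtain ⟨m, _⟩ := Ideal.exists_maximal A
  let := Ideal.Quotient.field m
  have := finite_of_finite_type_of_isJacobsonRing k (A ⧸ m)
  exact ⟨(IsAlgClosed.lift : (A ⧸ m) →ₐ[k] Ω).comp (Ideal.Quotient.mkₐ k m)⟩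

variable {R A Ω : Type*} [CommRing R] [CommRing A] [Algebra R A] [Field Ω] [IsAlgClosed Ω]

/-- A point of the fibre `κ(q) ⊗[R] A` over `q = ker (R → Ω)` is an extension of `R → Ω` to `A`. -/
theorem nonempty_algHom_of_ker_mem_range_comap [Algebra.FiniteType R A] [Algebra R Ω]
    (h : ⟨RingHom.ker (algebraMap R Ω), RingHom.ker_isPrime _⟩ ∈
      Set.range (PrimeSpectrum.comap (algebraMap R A))) :
    Nonempty (A →ₐ[R] Ω) := by
  let q := RingHom.ker (algebraMap R Ω)
  have : q.IsPrime := RingHom.ker_isPrime _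
  have : Nontrivial (q.ResidueField ⊗[R] A) :=
    (PrimeSpectrum.nontrivial_iff_mem_rangeComap ⟨q, this⟩).mpr h
  let g : q.ResidueField →ₐ[R] Ω :=
    Ideal.ResidueField.liftₐ q (Algebra.ofId R Ω) le_rfl fun _ hx => isUnit_iff_ne_zero.mpr hx
  let := g.toAlgebra
  have : IsScalarTower R q.ResidueField Ω := .of_algHom g
  obtain ⟨ψ⟩ := nonempty_algHom_of_finiteType (k := q.ResidueField) (A := q.ResidueField ⊗[R] A)
    (Ω := Ω)
  exact ⟨(ψ.restrictScalars R).comp Algebra.TensorProduct.includeRight⟩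

theorem exists_notMem_forall_exists_comp_algebraMap_eq [Algebra.FinitePresentation R A]
    {q : PrimeSpectrum R} (hq : q ∈ Set.range (PrimeSpectrum.comap (algebraMap R A))) :
    ∃ f ∉ q.asIdeal, ∀ φ : R →+* Ω, q.asIdeal ≤ RingHom.ker φ → φ f ≠ 0 →
      ∃ ψ : A →+* Ω, ψ.comp (algebraMap R A) = φ := by
  have hconstr := PrimeSpectrum.isConstructible_range_comap
    (RingHom.finitePresentation_algebraMap.mpr ‹Algebra.FinitePresentation R A›)
  obtain ⟨f, hfq, hf⟩ := exists_zeroLocus_inter_basicOpen_subset_of_isConstructible hconstr hq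
  refine ⟨f, hfq, fun φ hqφ hφf => ?_⟩
  let := φ.toAlgebra
  obtain ⟨ψ⟩ := nonempty_algHom_of_ker_mem_range_comap (A := A) (Ω := Ω) (hf ⟨hqφ, hφf⟩)
  exact ⟨ψ, ψ.comp_algebraMap⟩

theorem finite_compl_range_algHom_apply {K : Type*} [Field K] [Algebra K A]
    [Algebra.FiniteType K A] [Algebra K Ω] {t : A} (ht : Transcendental K t) :
    (Set.range fun ψ : A →ₐ[K] Ω => ψ t)ᶜ.Finite := by
  let : Algebra K[X] A := (Polynomial.aeval t).toAlgebra
  have : IsScalarTower K K[X] A := .of_algHom (Polynomial.aeval t)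
  have : Algebra.FiniteType K[X] A := .of_restrictScalars_finiteType K K[X] A
  have : Algebra.FinitePresentation K[X] A := Algebra.FinitePresentation.of_finiteType.mp this
  have hgeneric : (⊥ : PrimeSpectrum K[X]) ∈
      Set.range (PrimeSpectrum.comap (algebraMap K[X] A)) := by
    obtain ⟨P, hP, hP0⟩ := Ideal.exists_comap_eq_of_mem_minimalPrimes_of_injective
      (transcendental_iff_injective.mp ht) ⊥ (by simp [IsDomain.minimalPrimes_eq_singleton_bot])
    exact ⟨⟨P, hP⟩, PrimeSpectrum.ext hP0⟩
  obtain ⟨f, hf0, hf⟩ := exists_notMem_forall_exists_comp_algebraMap_eq (Ω := Ω) hgeneric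
  refine (f.rootSet_finite Ω).subset fun c hc => Polynomial.mem_rootSet.mpr ⟨hf0, ?_⟩
  by_contra hfc
  obtain ⟨ψ, hψ⟩ := hf (Polynomial.aeval c : K[X] →ₐ[K] Ω) bot_le hfc
  have hψ_aeval (g : K[X]) : ψ (Polynomial.aeval t g) = Polynomial.aeval c g :=
    RingHom.congr_fun hψ g
  refine hc ⟨{ ψ with commutes' := fun x => ?_ }, ?_⟩
  · simpa using hψ_aeval (Polynomial.C x)
  · simpa using hψ_aeval Polynomial.X

end Chevalley

section TorusPoint

variable {σ Ω : Type*} (K : Type*) [CommRing K] [CommRing Ω] [Algebra K Ω]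

/-- The coordinate ring `K[pᵢ, pᵢ⁻¹]` of the Zariski closure over `K` of the point `p` of the torus,
encoded as the subring of values at `p` of the Laurent polynomials over `K`. -/
def torusCoordinateRing (p : σ → Ωˣ) : Subalgebra K Ω :=
  Algebra.adjoin K (Set.range (fun i => (p i : Ω)) ∪ Set.range (fun i => ((p i)⁻¹ : Ωˣ)))

instance finiteType_torusCoordinateRing [Finite σ] (p : σ → Ωˣ) :
    Algebra.FiniteType K (torusCoordinateRing K p) :=
  .adjoin_of_finite ((Set.finite_range _).union (Set.finite_range _))

/-- The `i`-th coordinate function on the Zariski closure of `p`, which is invertible on the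
torus. -/
def torusCoordinate (p : σ → Ωˣ) (i : σ) : (torusCoordinateRing K p)ˣ where
  val := ⟨p i, Algebra.subset_adjoin (.inl ⟨i, rfl⟩)⟩
  inv := ⟨((p i)⁻¹ : Ωˣ), Algebra.subset_adjoin (.inr ⟨i, rfl⟩)⟩
  val_inv := Subtype.ext (by simp)
  inv_val := Subtype.ext (by simp)

variable {K}

theorem aeval_torusCoordinate_eq_zero {p : σ → Ωˣ} {P : MvPolynomial σ K}
    (hP : MvPolynomial.aeval (fun i => (p i : Ω)) P = 0) :
    MvPolynomial.aeval (fun i => (torusCoordinate K p i : torusCoordinateRing K p)) P = 0 :=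
  Subtype.val_injective <|
    (MvPolynomial.comp_aeval_apply (fun i => (torusCoordinate K p i : torusCoordinateRing K p))
      (torusCoordinateRing K p).val P).trans hP

theorem coe_prod_zpow_torusCoordinate [Fintype σ] (p : σ → Ωˣ) (a : σ → ℤ) :
    (((∏ i, torusCoordinate K p i ^ a i : (torusCoordinateRing K p)ˣ) :
      torusCoordinateRing K p) : Ω) = (∏ i, p i ^ a i : Ωˣ) := by
  have hcoord (i : σ) :
      Units.map ((torusCoordinateRing K p).val : _ →* Ω) (torusCoordinate K p i) = p i :=
    Units.ext rfl
  have hmap : Units.map ((torusCoordinateRing K p).val : _ →* Ω)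
      (∏ i, torusCoordinate K p i ^ a i) = ∏ i, p i ^ a i := by
    simp only [map_prod, map_zpow, hcoord]
  exact congrArg Units.val hmap

end TorusPoint

theorem finite_compl_image_prod_zpow_zeroLocus {σ K Ω : Type*} [Fintype σ] [Field K] [Field Ω]
    [IsAlgClosed Ω] [Algebra K Ω] (S : Set (MvPolynomial σ K)) (a : σ → ℤ) {p : σ → Ωˣ}
    (hp : ∀ P ∈ S, MvPolynomial.aeval (fun i => (p i : Ω)) P = 0)
    (ht : Transcendental K ((∏ i, p i ^ a i : Ωˣ) : Ω)) :
    ((fun x : σ → Ωˣ => ∏ i, x i ^ a i) ''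
      {x | ∀ P ∈ S, MvPolynomial.aeval (fun i => (x i : Ω)) P = 0})ᶜ.Finite := by
  let u := torusCoordinate K p
  have htB : Transcendental K ((∏ i, u i ^ a i : (torusCoordinateRing K p)ˣ) :
      torusCoordinateRing K p) := by
    rwa [← transcendental_algebraMap_iff (A := Ω) Subtype.val_injective,
      Subalgebra.algebraMap_apply, coe_prod_zpow_torusCoordinate]
  have hfin := finite_compl_range_algHom_apply (Ω := Ω) htB
  refine (hfin.preimage Units.val_injective.injOn).subset fun c hc => ?_
  rintro ⟨ψ, hψ⟩
  refine hc ⟨fun i => Units.map (ψ : _ →* Ω) (u i), fun P hP => ?_, ?_⟩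
  · calc MvPolynomial.aeval (fun i => ψ (u i)) P
        = ψ (MvPolynomial.aeval (fun i => (u i : torusCoordinateRing K p)) P) :=
          (MvPolynomial.comp_aeval_apply _ ψ P).symm
      _ = 0 := by rw [aeval_torusCoordinate_eq_zero (hp P hP), map_zero]
  · calc ∏ i, Units.map (ψ : _ →* Ω) (u i) ^ a i
        = Units.map (ψ : _ →* Ω) (∏ i, u i ^ a i) := by simp only [map_prod, map_zpow]
      _ = c := Units.ext hψ

/-- As the topology may be the cofinite one, this says that the complement of the image is
finite. -/
theorem character_image_isOpen_of_transcendental_value_general {σ k Ω : Type*} [Fintype σ]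
    [Field k] [Field Ω] [IsAlgClosed Ω] [Algebra k Ω] [TopologicalSpace Ωˣ] [T1Space Ωˣ]
    (S : Set (MvPolynomial σ Ω)) (hS : ∀ P ∈ S, ∀ m, IsAlgebraic k (MvPolynomial.coeff m P))
    (a : σ → ℤ)
    (hp : ∃ p ∈ {x : σ → Ωˣ | ∀ P ∈ S, MvPolynomial.eval (fun i => (x i : Ω)) P = 0},
      Transcendental k ((∏ i, p i ^ a i : Ωˣ) : Ω)) :
    IsOpen ((fun x : σ → Ωˣ => ∏ i, x i ^ a i) ''
      {x | ∀ P ∈ S, MvPolynomial.eval (fun i => (x i : Ω)) P = 0}) := by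
  let K := algebraicClosure k Ω
  have hS_range : S ⊆ Set.range (MvPolynomial.map (algebraMap K Ω)) := fun P hP => by
    rw [MvPolynomial.mem_range_map_iff_coeffs_subset]
    intro z hz
    obtain ⟨m, -, rfl⟩ := MvPolynomial.mem_coeffs_iff.mp hz
    exact ⟨⟨_, mem_algebraicClosure_iff.mpr (hS P hP m)⟩, rfl⟩
  obtain ⟨S, rfl⟩ := Set.subset_range_iff_exists_image_eq.mp hS_range
  simp only [Set.forall_mem_image, MvPolynomial.eval_map] at hp ⊢
  obtain ⟨p, hpS, ht⟩ := hp
  exact isClosed_compl_iff.mp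
    (finite_compl_image_prod_zpow_zeroLocus S a hpS (ht.extendScalars K)).isClosed

/-- Let `Z ⊆ (ℂˣ)ⁿ` be the set of common zeros (lying in `(ℂˣ)ⁿ`) of a family of
polynomials with algebraic coefficients, and let `χ : (ℂˣ)ⁿ → ℂˣ` be the character
`χ(x) = x₁^{a₁} ⋯ xₙ^{aₙ}`.  If `χ` takes a non-algebraic value at some point of `Z`,
then `χ(Z)` is open in `ℂˣ`. -/
theorem character_image_isOpen_of_transcendental_value
    (n : ℕ) (hn : 1 ≤ n) (S : Set (MvPolynomial (Fin n) ℂ))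
    (hS : ∀ P ∈ S, ∀ m, IsAlgebraic ℚ (MvPolynomial.coeff m P))
    (Z : Set (Fin n → ℂˣ))
    (hZ : Z = {x : Fin n → ℂˣ | ∀ P ∈ S, MvPolynomial.eval (fun i => (x i : ℂ)) P = 0})
    (a : Fin n → ℤ)
    (hp : ∃ p ∈ Z, ¬ IsAlgebraic ℚ ((∏ i, (p i) ^ (a i) : ℂˣ) : ℂ)) :
    IsOpen ((fun x : Fin n → ℂˣ => ∏ i, (x i) ^ (a i)) '' Z) := by
  subst hZ
  exact character_image_isOpen_of_transcendental_value_general S hS a hp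
end
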